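/- For every n with 5 ≤ n ≤ 12, the first player wins Building Nim BN(2n,5); formally, BNwins (fun _ : Fin 5 => 0) (2*n) for all n with 5 ≤ n ≤ 12. -/

import Mathlib

instance : Std.Commutative (fun x y : ℕ => x ^^^ y) := ⟨Nat.xor_comm⟩
instance : Std.Associative (fun x y : ℕ => x ^^^ y) := ⟨Nat.xor_assoc⟩

/-- `BNwins s r` holds iff the player to move wins Building Nim from position `s`
(the stack heights) with `r` tokens remaining to be placed. When no tokens remain,
Nim play starts, and by Bouton's theorem the player to move wins iff the
Nim-sum (bitwise XOR) of the stack heights is nonzero. -/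
def BNwins {ℓ : ℕ} : (Fin ℓ → ℕ) → ℕ → Prop
  | s, 0 => Finset.univ.fold (fun x y : ℕ => x ^^^ y) 0 s ≠ 0
  | s, r + 1 => ∃ i : Fin ℓ, ¬ BNwins (Function.update s i (s i + 1)) r

/-!
The outcome of a position depends only on the multiset of its stack heights. For a fixed total
number of tokens, the multisets from which the player to move loses are found by backward induction
over rounds of two placements: with no tokens left they are those of Nim-sum zero, and one round
earlier they are those in which every placement has a reply leading to a multiset already found.
For five stacks each layer contains at most a few dozen of these multisets, few enough for the
kernel to tabulate.
-/

/-- The multiset of stack heights: the position `s` up to reordering of the stacks. -/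
def stackHeights {ℓ : ℕ} (s : Fin ℓ → ℕ) : Multiset ℕ :=
  Finset.univ.val.map s

lemma card_stackHeights {ℓ : ℕ} (s : Fin ℓ → ℕ) : (stackHeights s).card = ℓ := by
  simp [stackHeights]

lemma mem_stackHeights {ℓ : ℕ} {s : Fin ℓ → ℕ} {a : ℕ} :
    a ∈ stackHeights s ↔ ∃ i, s i = a := by
  simp [stackHeights]

lemma stackHeights_const (ℓ a : ℕ) :
    stackHeights (fun _ : Fin ℓ => a) = Multiset.replicate ℓ a := by
  simp [stackHeights]

lemma not_bnWins_zero {ℓ : ℕ} {s : Fin ℓ → ℕ} :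
    ¬ BNwins s 0 ↔ (stackHeights s).fold (fun x y : ℕ => x ^^^ y) 0 = 0 :=
  not_not

/-- The result of placing a token on a stack of height `a` in a position with stack heights `M`;
meaningful only if `a ∈ M`. -/
def raiseStack (M : Multiset ℕ) (a : ℕ) : Multiset ℕ :=
  (a + 1) ::ₘ M.erase a

lemma stackHeights_update {ℓ : ℕ} (s : Fin ℓ → ℕ) (i : Fin ℓ) :
    stackHeights (Function.update s i (s i + 1)) = raiseStack (stackHeights s) (s i) := by
  have huniv : (Finset.univ : Finset (Fin ℓ)).val = i ::ₘ Finset.univ.val.erase i :=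
    (Multiset.cons_erase (Finset.mem_univ i)).symm
  have hrest : ∀ j ∈ Finset.univ.val.erase i, Function.update s i (s i + 1) j = s j :=
    fun j hj => Function.update_of_ne (Finset.univ.nodup.mem_erase_iff.1 hj).1 _ _
  rw [raiseStack, stackHeights, stackHeights, huniv, Multiset.map_cons, Multiset.map_cons,
    Multiset.map_congr rfl hrest, Function.update_self, Multiset.erase_cons_head]

lemma sum_raiseStack {M : Multiset ℕ} {a : ℕ} (ha : a ∈ M) :
    (raiseStack M a).sum = M.sum + 1 := by
  rw [raiseStack, Multiset.sum_cons, ← Multiset.sum_erase ha]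
  omega

lemma exists_reply_of_not_bnWins {ℓ r a : ℕ} {s : Fin ℓ → ℕ} (hs : ¬ BNwins s (r + 2))
    (ha : a ∈ stackHeights s) :
    ∃ b ∈ raiseStack (stackHeights s) a, ∃ t : Fin ℓ → ℕ,
      stackHeights t = raiseStack (raiseStack (stackHeights s) a) b ∧ ¬ BNwins t r := by
  obtain ⟨i, rfl⟩ := mem_stackHeights.1 ha
  obtain ⟨j, hj⟩ : BNwins (Function.update s i (s i + 1)) (r + 1) :=
    not_not.1 (not_exists.1 hs i)
  rw [← stackHeights_update]
  exact ⟨_, mem_stackHeights.2 ⟨j, rfl⟩, _, stackHeights_update _ j, hj⟩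

/-- `boundedPositions ℓ N b` lists the positions of `N` tokens on `ℓ` stacks of height at most `b`,
each once up to reordering of the stacks: the tallest stack is chosen first and bounds the rest. -/
def boundedPositions : ℕ → ℕ → ℕ → Multiset (Multiset ℕ)
  | 0, N, _ => if N = 0 then {0} else 0
  | ℓ + 1, N, b =>
    (Multiset.range (min b N + 1)).bind fun a => (boundedPositions ℓ (N - a) a).map (a ::ₘ ·)

lemma mem_boundedPositions {b : ℕ} {M : Multiset ℕ} (hb : ∀ a ∈ M, a ≤ b) :
    M ∈ boundedPositions M.card M.sum b := by
  induction hℓ : M.card generalizing M b with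
  | zero => simp [Multiset.card_eq_zero.1 hℓ, boundedPositions]
  | succ ℓ ih =>
    have hM : M ≠ 0 := Multiset.card_pos.1 (by omega)
    obtain ⟨a, ha, hmax⟩ := Multiset.exists_max_image id hM
    obtain ⟨M, rfl⟩ := Multiset.exists_cons_of_mem ha
    have hrest : M ∈ boundedPositions ℓ M.sum a :=
      ih (fun c hc => hmax c (Multiset.mem_cons_of_mem hc)) (by simpa using hℓ)
    simp only [boundedPositions, Multiset.mem_bind, Multiset.mem_range, Multiset.sum_cons]
    refine ⟨a, ?_, Multiset.mem_map_of_mem _ ?_⟩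
    · have := hb a ha
      omega
    · rwa [Nat.add_sub_cancel_left]

/-- The positions of `N` tokens on `ℓ` stacks, up to reordering of the stacks. -/
def positions (ℓ N : ℕ) : Multiset (Multiset ℕ) :=
  boundedPositions ℓ N N

lemma stackHeights_mem_positions {ℓ N : ℕ} {s : Fin ℓ → ℕ} (hN : (stackHeights s).sum = N) :
    stackHeights s ∈ positions ℓ N := by
  have h := mem_boundedPositions fun a (ha : a ∈ stackHeights s) => Multiset.le_sum_of_mem ha
  rwa [card_stackHeights, hN] at h

/-- The number whose digit of weight `(ℓ + 1) ^ h` counts the stacks of height `h`. It determines a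
position on `ℓ` stacks up to reordering, and is much cheaper to compare than a multiset. -/
def positionCode (ℓ : ℕ) (M : Multiset ℕ) : ℕ :=
  (M.map ((ℓ + 1) ^ ·)).sum

/-- `losingCodes ℓ N m` tabulates the codes of the positions on `ℓ` stacks from which the player to
move loses when `2 * m` of the `N` tokens are still to be placed. -/
def losingCodes (ℓ N : ℕ) : ℕ → Multiset ℕ
  | 0 => ((positions ℓ N).filter fun M => M.fold (fun x y : ℕ => x ^^^ y) 0 = 0).map
      (positionCode ℓ)
  | m + 1 => ((positions ℓ (N - 2 * (m + 1))).filter fun M =>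
      ∀ a ∈ M.toFinset, ∃ b ∈ (raiseStack M a).toFinset,
        positionCode ℓ (raiseStack (raiseStack M a) b) ∈ losingCodes ℓ N m).map (positionCode ℓ)

lemma positionCode_mem_losingCodes {ℓ N m : ℕ} {s : Fin ℓ → ℕ}
    (hN : (stackHeights s).sum + 2 * m = N) (hs : ¬ BNwins s (2 * m)) :
    positionCode ℓ (stackHeights s) ∈ losingCodes ℓ N m := by
  induction m generalizing s with
  | zero =>
    exact Multiset.mem_map_of_mem _ <|
      Multiset.mem_filter.2 ⟨stackHeights_mem_positions hN, not_bnWins_zero.1 hs⟩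
  | succ m ih =>
    refine Multiset.mem_map_of_mem _ <|
      Multiset.mem_filter.2 ⟨stackHeights_mem_positions (by omega), fun a ha => ?_⟩
    rw [Multiset.mem_toFinset] at ha
    obtain ⟨b, hb, t, ht, hloses⟩ := exists_reply_of_not_bnWins hs ha
    have hsum : (stackHeights t).sum = (stackHeights s).sum + 2 := by
      rw [ht, sum_raiseStack hb, sum_raiseStack ha]
    refine ⟨b, Multiset.mem_toFinset.2 hb, ?_⟩
    rw [← ht]
    exact ih (by omega) hloses

lemma bnWins_const_zero {ℓ n : ℕ}
    (h : positionCode ℓ (Multiset.replicate ℓ 0) ∉ losingCodes ℓ (2 * n) n) :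
    BNwins (fun _ : Fin ℓ => 0) (2 * n) := by
  contrapose! h
  rw [← stackHeights_const]
  exact positionCode_mem_losingCodes (by simp [stackHeights_const]) h

/-- For every `n` with `5 ≤ n ≤ 12`, the first player wins `BN(2n, 5)`. -/
theorem first_player_wins_special_cases (n : ℕ) (h5 : 5 ≤ n) (h12 : n ≤ 12) :
    BNwins (fun _ : Fin 5 => 0) (2 * n) := by
  apply bnWins_const_zero
  interval_cases n <;> decide +kernel
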